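/- Let K be a division ring, Λ a ring, φ : K → Λ a ring homomorphism, and t ∈ Λ an element such that the powers of t are left linearly independent over φ(K); that is, whenever a₀, a₁, …, aₙ ∈ K satisfy φ(a₀) + φ(a₁)·t + ⋯ + φ(aₙ)·tⁿ = 0 in Λ, then a₀ = a₁ = ⋯ = aₙ = 0. Let H be a left Λ-module which, regarded as a K-module via φ, is finitely generated over K. Then every element of H is a Λ-torsion element: for every h ∈ H there exists a nonzero λ ∈ Λ with λ • h = 0. -/

import Mathlib

section RankComparison

universe uK uΛ uH

variable {K : Type uK} [Ring K] {Λ : Type uΛ} [Ring Λ] [Module K Λ]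
  {H : Type uH} [AddCommGroup H] [Module Λ H] [Module K H] [IsScalarTower K Λ H]

theorem exists_ne_zero_smul_eq_zero_of_rank_lt
    (hrank : Cardinal.lift.{uΛ} (Module.rank K H) < Cardinal.lift.{uH} (Module.rank K Λ)) (h : H) :
    ∃ lam : Λ, lam ≠ 0 ∧ lam • h = 0 := by
  let evalAt : Λ →ₗ[K] H := (LinearMap.toSpanSingleton Λ H h).restrictScalars K
  have evalAt_not_injective : ¬ Function.Injective evalAt := fun hinj =>
    hrank.not_ge (LinearMap.lift_rank_le_of_injective evalAt hinj)
  rw [injective_iff_map_eq_zero] at evalAt_not_injective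
  push Not at evalAt_not_injective
  obtain ⟨lam, hlam, hne⟩ := evalAt_not_injective
  exact ⟨lam, hne, hlam⟩

theorem exists_ne_zero_smul_eq_zero_of_card_lt [StrongRankCondition K]
    {ι κ : Type*} [Fintype ι] [Fintype κ] (hcard : Fintype.card ι < Fintype.card κ)
    {v : κ → Λ} (hv : LinearIndependent K v)
    {g : ι → H} (hg : Submodule.span K (Set.range g) = ⊤) (h : H) :
    ∃ lam : Λ, lam ≠ 0 ∧ lam • h = 0 := by
  have rank_le : Module.rank K H ≤ Fintype.card ι := by
    rw [← rank_top K H, ← hg]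
    exact (rank_span_le _).trans (by simpa using Cardinal.mk_range_le_lift (f := g))
  have : Nontrivial K := nontrivial_of_invariantBasisNumber K
  have le_rank : (Fintype.card κ : Cardinal) ≤ Module.rank K Λ := by
    simpa using hv.cardinal_lift_le_rank
  refine exists_ne_zero_smul_eq_zero_of_rank_lt (K := K) ?_ h
  calc Cardinal.lift.{uΛ} (Module.rank K H)
      ≤ Fintype.card ι := by simpa using rank_le
    _ < Fintype.card κ := by exact_mod_cast hcard
    _ ≤ Cardinal.lift.{uH} (Module.rank K Λ) := by simpa using le_rank

end RankComparison

theorem torsion_of_finitely_generated_over_coefficients_general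
    {K : Type*} [Ring K] [StrongRankCondition K] {Λ : Type*} [Ring Λ] (φ : K →+* Λ)
    {ι κ : Type*} [Fintype ι] [Fintype κ] (hcard : Fintype.card ι < Fintype.card κ)
    (v : κ → Λ) (hindep : ∀ a : κ → K, ∑ i, φ (a i) * v i = 0 → ∀ i, a i = 0)
    {H : Type*} [AddCommGroup H] [Module Λ H]
    (g : ι → H) (hspan : ∀ h : H, ∃ c : ι → K, h = ∑ i, φ (c i) • g i) (h : H) :
    ∃ lam : Λ, lam ≠ 0 ∧ lam • h = 0 := by
  let : Module K Λ := Module.compHom Λ φ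
  let : Module K H := Module.compHom H φ
  have : IsScalarTower K Λ H := ⟨fun a x y => mul_smul (φ a) x y⟩
  have hv : LinearIndependent K v := Fintype.linearIndependent_iff.mpr hindep
  have hg : Submodule.span K (Set.range g) = ⊤ := by
    refine Submodule.eq_top_iff'.mpr fun x => (Submodule.mem_span_range_iff_exists_fun K).mpr ?_
    exact (hspan x).imp fun _ hc => hc.symm
  exact exists_ne_zero_smul_eq_zero_of_card_lt hcard hv hg h

/-- If `K` is a division ring, `φ : K → Λ` a ring homomorphism, and `t ∈ Λ` has its powers
left linearly independent over `φ(K)`, then any left `Λ`-module that is finitely generated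
over `K` (via `φ`) consists entirely of `Λ`-torsion elements. -/
theorem torsion_of_finitely_generated_over_coefficients
    {K : Type*} [DivisionRing K] {Λ : Type*} [Ring Λ]
    (φ : K →+* Λ) (t : Λ)
    (hindep : ∀ (n : ℕ) (a : Fin (n + 1) → K),
      (∑ i : Fin (n + 1), φ (a i) * t ^ (i : ℕ)) = 0 → ∀ i, a i = 0)
    {H : Type*} [AddCommGroup H] [Module Λ H]
    (hfg : ∃ (n : ℕ) (g : Fin n → H),
      ∀ h : H, ∃ c : Fin n → K, h = ∑ i : Fin n, φ (c i) • g i) :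
    ∀ h : H, ∃ lam : Λ, lam ≠ 0 ∧ lam • h = 0 := by
  obtain ⟨n, g, hspan⟩ := hfg
  exact torsion_of_finitely_generated_over_coefficients_general φ (by simp)
    (fun i : Fin (n + 1) => t ^ (i : ℕ)) (hindep n) g hspan
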